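/- Let k be a field and N ≥ 2 an integer. Let X be an N-complex of k-vector spaces: a family (X^i)_{i∈ℤ} of k-vector spaces with k-linear maps d^i : X^i → X^{i+1} such that every N-fold composite d^{i+N−1}∘⋯∘d^{i} is zero. Write d^{(l),i} = d^{i+l−1}∘⋯∘d^{i} : X^i → X^{i+l} for the l-fold composite (with d^{(0),i} = id). Suppose X is N-acyclic, i.e. all its homologies vanish: for every i ∈ ℤ and every 1 ≤ r ≤ N−1, ker(d^{(r),i}) = im(d^{(N−r),i−(N−r)}). Then X is contractible (a zero object of the homotopy category of N-complexes): there exist k-linear maps S^i : X^i → X^{i+1−N} such that for every i ∈ ℤ, Σ_{l=0}^{N−1} d^{(N−1−l),\,i+l+1−N} ∘ S^{i+l} ∘ d^{(l),i} = id_{X^i}. -/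

import Mathlib

/-- Transport a graded component along an equality of degrees. -/
def castLM {k : Type*} [DivisionRing k] {X : ℤ → Type*} [∀ i, AddCommGroup (X i)]
    [∀ i, Module k (X i)] {i j : ℤ} (h : i = j) : X i →ₗ[k] X j := by
  subst h; exact LinearMap.id

/-- The `l`-fold iterate `d^{(l),i} : X^i → X^{i+l}` of the differential of an `N`-complex. -/
def dpow {k : Type*} [DivisionRing k] {X : ℤ → Type*} [∀ i, AddCommGroup (X i)]
    [∀ i, Module k (X i)] (d : ∀ i : ℤ, X i →ₗ[k] X (i + 1)) :
    (l : ℕ) → (i : ℤ) → (X i →ₗ[k] X (i + l))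
  | 0, i => castLM (by simp)
  | l + 1, i => castLM (by push_cast; ring) ∘ₗ (dpow d l (i + 1)) ∘ₗ d i

/-!
Let `D` be the total differential on the total space `∏ i, X i`. It suffices to find any
endomorphism `S` of the total space, homogeneous or not, with `∑ D ^ (N - 1 - l) S D ^ l = 1`: since
`D` is homogeneous, the degree-`i` part of this equation only involves the matrix entries
`X j → X (j + 1 - N)` of `S`, and these form a contraction.

To find `S`, choose `G` with `D ^ (N - 1) G D ^ (N - 1) = D ^ (N - 1)` and put
`T = ∑ D ^ (N - 1 - l) G D ^ l`. As `D ^ N = 0`, both `D T` and `T D` are equal to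
`∑ D ^ (N - l) G D ^ l` over `0 ≤ l ≤ N`. Now `1 - G D ^ (N - 1)` maps into `ker D ^ (N - 1) = im D`
and all other terms of `T` are left multiples of `D`, so `1 - T` is a left multiple of `D` which
commutes with `D`, hence nilpotent. So `T` is invertible, and `S = G T⁻¹` is a solution.
-/

theorem isNilpotent_of_dvd_of_commute {M : Type*} [MonoidWithZero M] {a b : M}
    (ha : IsNilpotent a) (hab : a ∣ b) (hcomm : Commute a b) : IsNilpotent b := by
  obtain ⟨c, rfl⟩ := hab
  obtain ⟨n, hn⟩ := ha
  have mul_pow_eq (m : ℕ) : (a * c) ^ m = a ^ m * c ^ m := by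
    induction m with
    | zero => simp
    | succ m ih =>
      calc (a * c) ^ (m + 1) = a * c * a ^ m * c ^ m := by rw [pow_succ', ih, mul_assoc _ _ (c ^ m)]
        _ = a ^ m * (a * c) * c ^ m := by rw [(hcomm.pow_left m).eq]
        _ = a ^ (m + 1) * c ^ (m + 1) := by rw [pow_succ a, pow_succ' c]; simp only [mul_assoc]
  exact ⟨n, by rw [mul_pow_eq, hn, zero_mul]⟩

section HomotopySum

open Finset

/-- The sum `∑ a ^ (n - l) * s * a ^ l` over `0 ≤ l ≤ n`. When `a` is the differential of an
`(n + 1)`-complex, this is the map which the homotopy `s` shows to be null-homotopic. Indexing by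
the antidiagonal, with `l = p.1`, avoids truncated subtraction. -/
def homotopySum {R : Type*} [Semiring R] (n : ℕ) (a s : R) : R :=
  ∑ p ∈ antidiagonal n, a ^ p.2 * s * a ^ p.1

section Semiring

variable {R : Type*} [Semiring R]

theorem homotopySum_eq_sum_range (n : ℕ) (a s : R) :
    homotopySum n a s = ∑ l ∈ range (n + 1), a ^ (n - l) * s * a ^ l :=
  Nat.sum_antidiagonal_eq_sum_range_succ (fun l m => a ^ m * s * a ^ l) n

theorem homotopySum_succ (n : ℕ) (a s : R) :
    homotopySum (n + 1) a s = a ^ (n + 1) * s + homotopySum n a s * a := by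
  simp [homotopySum, Nat.sum_antidiagonal_succ, sum_mul, pow_succ, mul_assoc]

theorem homotopySum_succ' (n : ℕ) (a s : R) :
    homotopySum (n + 1) a s = s * a ^ (n + 1) + a * homotopySum n a s := by
  simp [homotopySum, Nat.sum_antidiagonal_succ', mul_sum, pow_succ', mul_assoc]

theorem commute_homotopySum {n : ℕ} {a : R} (ha : a ^ (n + 1) = 0) (s : R) :
    Commute a (homotopySum n a s) :=
  calc a * homotopySum n a s = homotopySum (n + 1) a s := by simp [homotopySum_succ', ha]
    _ = homotopySum n a s * a := by simp [homotopySum_succ, ha]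

theorem homotopySum_mul_of_commute (n : ℕ) {a v : R} (s : R) (h : Commute a v) :
    homotopySum n a (s * v) = homotopySum n a s * v := by
  simp only [homotopySum, sum_mul, mul_assoc, (h.pow_left _).eq]

end Semiring

variable {R : Type*} [Ring R]

theorem dvd_homotopySum_sub (n : ℕ) (a s : R) : a ∣ homotopySum n a s - s * a ^ n := by
  cases n with
  | zero => simp [homotopySum]
  | succ n => simp [homotopySum_succ']

theorem exists_homotopySum_eq_one {n : ℕ} {a s : R} (ha : a ^ (n + 1) = 0)
    (hs : a ∣ 1 - s * a ^ n) : ∃ s', homotopySum n a s' = 1 := by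
  set t := homotopySum n a s with ht
  have hcomm : Commute a t := commute_homotopySum ha s
  have hdvd : a ∣ 1 - t := by
    simpa using dvd_sub hs (dvd_homotopySum_sub n a s)
  have hnil : IsNilpotent (1 - t) :=
    isNilpotent_of_dvd_of_commute ⟨n + 1, ha⟩ hdvd ((Commute.one_right a).sub_right hcomm)
  obtain ⟨u, hu⟩ : IsUnit t := by simpa using hnil.isUnit_one_sub
  rw [← hu] at hcomm
  exact ⟨s * ↑u⁻¹, by
    rw [homotopySum_mul_of_commute n s hcomm.units_inv_right, ← ht, ← hu, u.mul_inv]⟩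

end HomotopySum

section VectorSpace

variable {k : Type*} [DivisionRing k] {V W : Type*} [AddCommGroup V] [Module k V]
  [AddCommGroup W] [Module k W]

theorem exists_rightInverse_on_range (f : V →ₗ[k] W) :
    ∃ g : W →ₗ[k] V, ∀ y ∈ LinearMap.range f, f (g y) = y := by
  obtain ⟨s, hs⟩ := f.rangeRestrict.exists_rightInverse_of_surjective f.range_rangeRestrict
  obtain ⟨g, hg⟩ := s.exists_extend
  refine ⟨g, fun y hy => ?_⟩
  have hgy : g y = s ⟨y, hy⟩ := LinearMap.congr_fun hg ⟨y, hy⟩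
  rw [hgy]
  exact congrArg Subtype.val (LinearMap.congr_fun hs ⟨y, hy⟩)

theorem dvd_of_range_le {f g : Module.End k V} (h : LinearMap.range g ≤ LinearMap.range f) :
    f ∣ g := by
  obtain ⟨r, hr⟩ := exists_rightInverse_on_range f
  exact ⟨r * g, LinearMap.ext fun x => (hr _ (h ⟨x, rfl⟩)).symm⟩

theorem exists_homotopySum_eq_one_of_ker_pow_le_range {D : Module.End k V} {n : ℕ}
    (hD : D ^ (n + 1) = 0) (hker : LinearMap.ker (D ^ n) ≤ LinearMap.range D) :
    ∃ S, homotopySum n D S = 1 := by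
  obtain ⟨G, hG⟩ := exists_rightInverse_on_range (D ^ n)
  have hrange : LinearMap.range (1 - G * D ^ n) ≤ LinearMap.ker (D ^ n) := by
    rintro _ ⟨x, rfl⟩
    simp [hG ((D ^ n) x) ⟨x, rfl⟩]
  exact exists_homotopySum_eq_one hD (dvd_of_range_le (hrange.trans hker))

end VectorSpace

section NComplex

variable {k : Type*} [DivisionRing k] {X : ℤ → Type*} [∀ i, AddCommGroup (X i)]
  [∀ i, Module k (X i)]

/-- The differential of an `N`-complex as an endomorphism of its total space `∏ i, X i`: it sends
`f` to the family with entry `d i (f i)` in degree `i + 1`. Reindexing the product along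
`i ↦ i + 1` avoids transporting entries between equal degrees. -/
def totalDifferential (d : ∀ i : ℤ, X i →ₗ[k] X (i + 1)) : Module.End k (∀ i, X i) :=
  (LinearEquiv.piCongrLeft k X (Equiv.addRight (1 : ℤ))).toLinearMap ∘ₗ LinearMap.piMap d

variable (d : ∀ i : ℤ, X i →ₗ[k] X (i + 1))

theorem totalDifferential_apply_add_one (f : ∀ i, X i) (i : ℤ) :
    totalDifferential d f (i + 1) = d i (f i) :=
  Equiv.piCongrLeft_apply_apply X (Equiv.addRight (1 : ℤ)) (fun j => d j (f j)) i

theorem castLM_apply_pi (f : ∀ i, X i) {i j : ℤ} (h : i = j) :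
    castLM (k := k) h (f i) = f j := by
  subst h; rfl

theorem totalDifferential_pow_apply (l : ℕ) (f : ∀ i, X i) (i : ℤ) :
    (totalDifferential d ^ l) f (i + l) = dpow d l i (f i) := by
  induction l generalizing f i with
  | zero => exact (castLM_apply_pi f _).symm
  | succ l ih =>
    rw [pow_succ, Module.End.mul_apply, dpow, LinearMap.comp_apply, LinearMap.comp_apply,
      ← totalDifferential_apply_add_one, ← ih, castLM_apply_pi]

theorem castLM_dpow_apply (l : ℕ) (f : ∀ i, X i) {i j : ℤ} (h : i + l = j) :
    castLM (k := k) h (dpow d l i (f i)) = (totalDifferential d ^ l) f j := by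
  rw [← totalDifferential_pow_apply, castLM_apply_pi]

theorem totalDifferential_pow_single (l : ℕ) (i : ℤ) (x : X i) :
    (totalDifferential d ^ l) (Pi.single i x) = Pi.single (i + l) (dpow d l i x) := by
  ext j
  obtain ⟨m, rfl⟩ : ∃ m, j = m + l := ⟨j - l, by ring⟩
  rw [totalDifferential_pow_apply]
  obtain rfl | hne := eq_or_ne m i
  · simp
  · simp [hne]

theorem totalDifferential_pow_eq_zero {l : ℕ} (h : ∀ i, dpow d l i = 0) :
    totalDifferential d ^ l = 0 := by
  ext1 f
  ext j
  rw [← castLM_dpow_apply d l f (sub_add_cancel j _), h]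
  simp

theorem ker_totalDifferential_pow_le_range {l : ℕ}
    (h : ∀ i, LinearMap.ker (dpow d l (i + 1)) ≤ LinearMap.range (d i)) :
    LinearMap.ker (totalDifferential d ^ l) ≤ LinearMap.range (totalDifferential d) := by
  intro f hf
  have hmem (i : ℤ) : f (i + 1) ∈ LinearMap.range (d i) := by
    apply h
    rw [LinearMap.mem_ker, ← totalDifferential_pow_apply, LinearMap.mem_ker.mp hf, Pi.zero_apply]
  choose g hg using hmem
  refine ⟨g, funext fun j => ?_⟩
  obtain ⟨i, rfl⟩ : ∃ i, j = i + 1 := ⟨j - 1, by ring⟩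
  rw [totalDifferential_apply_add_one, hg]

theorem range_castLM_comp_dpow_le {l : ℕ} (hl : l ≠ 0) {i j : ℤ} (h : i + l = j + 1) :
    LinearMap.range (castLM (k := k) (X := X) h ∘ₗ dpow d l i) ≤ LinearMap.range (d j) := by
  rintro _ ⟨x, rfl⟩
  obtain ⟨m, rfl⟩ := Nat.exists_eq_succ_of_ne_zero hl
  have hcast := castLM_dpow_apply d (m + 1) (Pi.single i x) h
  rw [Pi.single_eq_same, pow_succ', Module.End.mul_apply, totalDifferential_apply_add_one] at hcast
  exact ⟨_, hcast.symm⟩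

end NComplex

theorem add_val_add_one_sub_add_sub_cancel {N : ℕ} (i : ℤ) (l : Fin N) :
    i + ((l : ℕ) : ℤ) + 1 - N + ((N - 1 - (l : ℕ) : ℕ) : ℤ) = i := by
  have := l.isLt
  omega

theorem acyclic_N_complex_contractible_general
    {k : Type*} [DivisionRing k] (N : ℕ) (hN : 1 ≤ N)
    (X : ℤ → Type*) [∀ i, AddCommGroup (X i)] [∀ i, Module k (X i)]
    (d : ∀ i : ℤ, X i →ₗ[k] X (i + 1))
    (hdN : ∀ i : ℤ, dpow d N i = 0)
    (hker : ∀ i : ℤ, LinearMap.ker (dpow d (N - 1) (i + 1)) ≤ LinearMap.range (d i)) :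
    ∃ S : ∀ i : ℤ, X i →ₗ[k] X (i + 1 - N),
      ∀ i : ℤ,
        (∑ l : Fin N,
          castLM (add_val_add_one_sub_add_sub_cancel i l) ∘ₗ
            dpow d (N - 1 - (l : ℕ)) (i + ((l : ℕ) : ℤ) + 1 - N) ∘ₗ
            S (i + ((l : ℕ) : ℤ)) ∘ₗ
            dpow d (l : ℕ) i) = LinearMap.id := by
  obtain ⟨n, rfl⟩ := Nat.exists_eq_add_of_le' hN
  obtain ⟨S, hS⟩ := exists_homotopySum_eq_one_of_ker_pow_le_range
    (totalDifferential_pow_eq_zero d hdN) (ker_totalDifferential_pow_le_range d hker)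
  refine ⟨fun i => LinearMap.proj _ ∘ₗ S ∘ₗ LinearMap.single k X i,
    fun i => LinearMap.ext fun x => ?_⟩
  have hSx : homotopySum n (totalDifferential d) S (Pi.single i x) i = x := by simp [hS]
  rw [homotopySum_eq_sum_range, Finset.sum_range] at hSx
  simp only [LinearMap.sum_apply, Finset.sum_apply, Module.End.mul_apply,
    totalDifferential_pow_single] at hSx
  rw [LinearMap.sum_apply]
  refine (Finset.sum_congr rfl fun l _ => ?_).trans hSx
  exact castLM_dpow_apply d (n - l) (S (Pi.single (i + l) (dpow d l i x))) _

/-- over a field `k`, an `N`-acyclic `N`-complex `X` of `k`-vector spaces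
(all homologies vanish: `ker d^{(r),i} = im d^{(N−r),i−(N−r)}`) is contractible: there are
linear maps `S^i : X^i → X^{i+1−N}` with
`Σ_{l=0}^{N−1} d^{(N−1−l),i+l+1−N} ∘ S^{i+l} ∘ d^{(l),i} = id` for every `i`. -/
theorem acyclic_N_complex_contractible
    {k : Type*} [Field k] (N : ℕ) (hN : 2 ≤ N)
    (X : ℤ → Type*) [∀ i, AddCommGroup (X i)] [∀ i, Module k (X i)]
    (d : ∀ i : ℤ, X i →ₗ[k] X (i + 1))
    (hdN : ∀ i : ℤ, dpow d N i = 0)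
    (hacyc : ∀ (i : ℤ) (r : ℕ), 1 ≤ r → r ≤ N - 1 →
      LinearMap.ker (dpow d r i) =
        LinearMap.range ((castLM (X := X) (by omega) : X ((i - ((N - r : ℕ) : ℤ)) + ((N - r : ℕ) : ℤ)) →ₗ[k] X i) ∘ₗ
          dpow d (N - r) (i - ((N - r : ℕ) : ℤ)))) :
    ∃ S : ∀ i : ℤ, X i →ₗ[k] X (i + 1 - N),
      ∀ i : ℤ,
        (∑ l : Fin N,
          (castLM (X := X) (by have := l.isLt; omega) :
              X ((i + ((l : ℕ) : ℤ) + 1 - N) + ((N - 1 - (l : ℕ) : ℕ) : ℤ)) →ₗ[k] X i) ∘ₗ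
            dpow d (N - 1 - (l : ℕ)) (i + ((l : ℕ) : ℤ) + 1 - N) ∘ₗ
            S (i + ((l : ℕ) : ℤ)) ∘ₗ
            dpow d (l : ℕ) i) = LinearMap.id := by
  refine acyclic_N_complex_contractible_general N (by omega) X d hdN fun i => ?_
  rw [hacyc (i + 1) (N - 1) (by omega) le_rfl]
  exact range_castLM_comp_dpow_le d (by omega) _
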